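/- In the Random Edge graph setting, assume additionally that G is 3-connected. Then for every vertex v ∈ V one has E(v) ≤ (130/87)·n − 115/29. (This is the combinatorial form of Theorem 3.2: the expected number of pivot steps taken by Random Edge on a 3-dimensional linear program with n constraints is at most (130/87)·n − 115/29.) -/

import Mathlib

open Finset

/-- The abstract local facts used by the induction. -/
structure REctx {V : Type} [LinearOrder V] (Adj : V → V → Prop) (d : V → ℕ) (e f : V → ℝ)
    (vmax : V) : Prop where
  symm : ∀ a b, Adj a b → Adj b a
  irr : ∀ a, ¬ Adj a a
  pos : ∀ u v, u < v → 1 ≤ d v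
  le2 : ∀ v, v < vmax → d v ≤ 2
  T1 : ∀ v, d v = 1 → ∃ x, x < v ∧ Adj v x ∧ e v = 87 + e x ∧ ∀ z, z < v → Adj v z → z = x
  T2 : ∀ v, d v = 2 → ∃ x y, x < y ∧ y < v ∧ Adj v x ∧ Adj v y ∧ e v = 87 + (e x + e y) / 2 ∧
    ∀ z, z < v → Adj v z → z = x ∨ z = y
  gap : ∀ u v, u < v → v < vmax → f u + 42 ≤ f v
  gap1 : ∀ u v, u < v → d v = 1 → f u + 88 ≤ f v
  twoup : ∀ x a b, Adj x a → Adj x b → x < a → x < b → a ≠ b → d x ≤ 1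
  up1 : ∀ x a b z, d x = 1 → Adj x a → Adj x b → x < a → x < b → a ≠ b → Adj x z → x < z →
    z = a ∨ z = b
  deg3 : ∀ x a b c z, Adj x a → Adj x b → Adj x c → a ≠ b → a ≠ c → b ≠ c → Adj x z →
    z = a ∨ z = b ∨ z = c
  hasup : ∀ v, v < vmax → ∃ u, Adj v u ∧ v < u
  cut : ∀ (A : Finset V) (p q : V), p ≠ q → p ∉ A → q ∉ A → Odd A.card →
    (∀ a ∈ A, ∀ b, Adj a b → b ∈ A ∨ b = p ∨ b = q) → False

namespace REctx

variable {V : Type} [LinearOrder V] {Adj : V → V → Prop} {d : V → ℕ} {e f : V → ℝ} {vmax : V}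

theorem up2 (H : REctx Adj d e f vmax) {x a b : V} (hx : d x = 2) (ha : Adj x a) (hb : Adj x b)
    (h1 : x < a) (h2 : x < b) : a = b := by
  by_contra h
  have := H.twoup x a b ha hb h1 h2 h
  omega

/-- Lower bound for a 2-vertex from the values of its lower neighbours. -/
theorem caseA (H : REctx Adj d e f vmax) {v w1 w2 : V} (hv : v < vmax)
    (IH : ∀ u, u < v → e u ≤ f u ∧ (d u ≤ 1 → e u ≤ f u - 1))
    (h12 : w1 < w2) (h2v : w2 < v) (a1 : Adj v w1) (a2 : Adj v w2)
    (he : e v = 87 + (e w1 + e w2) / 2) (hd : d w2 = 1) : e v ≤ f v := by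
  have h1v := h12.trans h2v
  have i1 := IH w1 h1v
  have i2 := (IH w2 h2v).2 (by omega)
  have g12 := H.gap1 _ _ h12 hd
  have g2v := H.gap _ _ h2v hv
  by_cases hb : ∃ t, w2 < t ∧ t < v
  · obtain ⟨t, t1, t2⟩ := hb
    have := H.gap _ _ t1 (t2.trans hv)
    have := H.gap _ _ t2 hv
    linarith [i1.1]
  by_cases hb' : ∃ t, w1 < t ∧ t < w2
  · obtain ⟨t, t1, t2⟩ := hb'
    have := H.gap _ _ t1 (t2.trans (h2v.trans hv))
    have := H.gap1 _ _ t2 hd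
    linarith [i1.1]
  obtain ⟨x, hx, ax, ex, -⟩ := H.T1 w2 hd
  rcases lt_trichotomy x w1 with h | h | h
  · have := H.gap _ _ h (h1v.trans hv)
    have := (IH x (hx.trans h2v)).1
    linarith [i1.1]
  · subst h
    have := H.twoup x w2 v (H.symm _ _ ax) (H.symm _ _ a1) h12 h1v (ne_of_lt h2v)
    have := i1.2 this
    linarith
  · exact absurd ⟨x, h, hx⟩ hb'

set_option maxHeartbeats 1000000 in
/-- `w1, w2, v` consecutive and forming a triangle. -/
theorem caseB1a (H : REctx Adj d e f vmax) {v w1 w2 x1 : V} (hv : v < vmax)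
    (IH : ∀ u, u < v → e u ≤ f u ∧ (d u ≤ 1 → e u ≤ f u - 1)) (hdv : d v = 2)
    (h12 : w1 < w2) (h2v : w2 < v) (a1 : Adj v w1) (a2 : Adj v w2)
    (he : e v = 87 + (e w1 + e w2) / 2) (hvl : ∀ z, z < v → Adj v z → z = w1 ∨ z = w2)
    (hd : d w2 = 2) (hx1 : x1 < w1) (ax1 : Adj w2 x1) (aw : Adj w2 w1)
    (he2 : e w2 = 87 + (e x1 + e w1) / 2) (h2l : ∀ z, z < w2 → Adj w2 z → z = x1 ∨ z = w1) :
    e v ≤ f v := by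
  have h1v := h12.trans h2v
  have hw1 : d w1 = 1 := by
    have := H.twoup w1 w2 v (H.symm _ _ aw) (H.symm _ _ a1) h12 h1v (ne_of_lt h2v)
    have := H.pos _ _ hx1
    omega
  have g12 := H.gap _ _ h12 (h2v.trans hv)
  have g2v := H.gap _ _ h2v hv
  obtain ⟨y, hy, ay, ey, hyl⟩ := H.T1 w1 hw1
  obtain ⟨u, au, hu⟩ := H.hasup v hv
  have hvup : ∀ z, v < z → Adj v z → z = u := fun z hz az => H.up2 hdv az au hz hu
  have hw2up : ∀ z, w2 < z → Adj w2 z → z = v :=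
    fun z hz az => H.up2 hd az (H.symm _ _ a2) hz h2v
  have hw1up : ∀ z, w1 < z → Adj w1 z → z = w2 ∨ z = v :=
    fun z hz az => H.up1 w1 w2 v z hw1 (H.symm _ _ aw) (H.symm _ _ a1) h12 h1v (ne_of_lt h2v) az hz
  have ix1 := IH x1 (hx1.trans h1v)
  have iy := IH y (hy.trans h1v)
  have gx := H.gap1 _ _ hx1 hw1
  have gy := H.gap1 _ _ hy hw1
  rcases lt_trichotomy y x1 with h | h | h
  · have := H.gap _ _ h (hx1.trans (h1v.trans hv))
    linarith [ix1.1, iy.1]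
  · exfalso
    subst h
    refine H.cut {w1, w2, v} y u (ne_of_lt (hx1.trans (h1v.trans hu))) ?_ ?_ ?_ ?_
    · simp only [mem_insert, mem_singleton, not_or]
      exact ⟨hx1.ne, (hx1.trans h12).ne, (hx1.trans h1v).ne⟩
    · simp only [mem_insert, mem_singleton, not_or]
      exact ⟨(h1v.trans hu).ne', (h2v.trans hu).ne', hu.ne'⟩
    · rw [card_eq_three.2 ⟨w1, w2, v, h12.ne, h1v.ne, h2v.ne, rfl⟩]; decide
    · intro a ha b hab
      simp only [mem_insert, mem_singleton] at ha ⊢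
      have hne : b ≠ a := fun h => H.irr a (h ▸ hab)
      rcases ha with rfl | rfl | rfl <;> rcases lt_or_gt_of_ne hne with hl | hl
      · simp [hyl b hl hab]
      · rcases hw1up b hl hab with h | h <;> simp [h]
      · rcases h2l b hl hab with h | h <;> simp [h]
      · simp [hw2up b hl hab]
      · rcases hvl b hl hab with h | h <;> simp [h]
      · simp [hvup b hl hab]
  by_cases hb : ∃ t, y < t ∧ t < w1
  · obtain ⟨t, t1, t2⟩ := hb
    have := H.gap _ _ t1 (t2.trans (h1v.trans hv))
    have := H.gap1 _ _ t2 hw1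
    have := H.gap _ _ h (hy.trans (h1v.trans hv))
    linarith [ix1.1, iy.1]
  have hyv := hy.trans h1v
  have hx1v := hx1.trans h1v
  have gxy := H.gap _ _ h (hyv.trans hv)
  have hdy : d y = 1 ∨ d y = 2 := by
    have := H.pos _ _ h
    have := H.le2 y (hyv.trans hv)
    omega
  rcases hdy with hdy | hdy
  · -- y is a 1-vertex
    have gxy1 := H.gap1 _ _ h hdy
    have iy' := iy.2 (by omega)
    by_cases hb : ∃ t, x1 < t ∧ t < y
    · obtain ⟨t, t1, t2⟩ := hb
      have := H.gap _ _ t1 (t2.trans (hyv.trans hv))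
      have := H.gap1 _ _ t2 hdy
      linarith [ix1.1]
    obtain ⟨z, hz, az, ez, -⟩ := H.T1 y hdy
    rcases lt_trichotomy z x1 with h' | h' | h'
    · have := H.gap _ _ h' (hx1v.trans hv)
      have := (IH z (hz.trans hyv)).1
      linarith [ix1.1]
    · subst h'
      have := H.twoup z y w2 (H.symm _ _ az) (H.symm _ _ ax1) h (hx1.trans h12)
        (ne_of_lt (hy.trans h12))
      have := ix1.2 this
      linarith
    · exact absurd ⟨z, h', hz⟩ hb
  · -- y is a 2-vertex
    obtain ⟨z1, z2, hz12, hz2, az1, az2, ez, hzl⟩ := H.T2 y hdy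
    have iz1 := IH z1 ((hz12.trans hz2).trans hyv)
    have iz2 := IH z2 (hz2.trans hyv)
    have gz12 := H.gap _ _ hz12 (hz2.trans (hyv.trans hv))
    have gz2 := H.gap _ _ hz2 (hyv.trans hv)
    by_cases hb : ∃ t, x1 < t ∧ t < y
    · obtain ⟨t, t1, t2⟩ := hb
      have gt1 := H.gap _ _ t1 (t2.trans (hyv.trans hv))
      have gt2 := H.gap _ _ t2 (hyv.trans hv)
      by_cases hb1 : ∃ s, x1 < s ∧ s < t
      · obtain ⟨s, s1, s2⟩ := hb1
        have := H.gap _ _ s1 (s2.trans (t2.trans (hyv.trans hv)))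
        have := H.gap _ _ s2 (t2.trans (hyv.trans hv))
        linarith [ix1.1, iz1.1, iz2.1]
      by_cases hb2 : ∃ s, t < s ∧ s < y
      · obtain ⟨s, s1, s2⟩ := hb2
        have := H.gap _ _ s1 (s2.trans (hyv.trans hv))
        have := H.gap _ _ s2 (hyv.trans hv)
        linarith [ix1.1, iz1.1, iz2.1]
      have hdt : d t = 1 ∨ d t = 2 := by
        have := H.pos _ _ t1
        have := H.le2 t (t2.trans (hyv.trans hv))
        omega
      rcases hdt with hdt | hdt
      · have := H.gap1 _ _ t1 hdt
        linarith [ix1.1, iz1.1, iz2.1]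
      have hz2t : z2 ≤ t := not_lt.1 fun hh => hb2 ⟨z2, hh, hz2⟩
      have hx1d : Adj y x1 → d x1 ≤ 1 := fun hh => H.twoup x1 y w2 (H.symm _ _ hh)
        (H.symm _ _ ax1) h (hx1.trans h12) (ne_of_lt (hy.trans h12))
      rcases hz2t.lt_or_eq with hz2t | hz2t
      · have hz2x : z2 ≤ x1 := not_lt.1 fun hh => hb1 ⟨z2, hh, hz2t⟩
        rcases hz2x.lt_or_eq with hz2x | hz2x
        · have := H.gap _ _ hz2x (hx1v.trans hv)
          linarith [ix1.1, iz1.1, iz2.1]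
        · subst hz2x
          have h0 := H.pos _ _ hz12
          have := H.gap1 _ _ hz12 (by have := hx1d az2; omega)
          linarith [ix1.1, iz1.1, iz2.1]
      · subst hz2t
        obtain ⟨r1, r2, hr12, hr2, ar1, ar2, er, -⟩ := H.T2 z2 hdt
        have hr2v : r2 < v := hr2.trans (hz2.trans hyv)
        have ir1 := IH r1 (hr12.trans hr2v)
        have ir2 := IH r2 hr2v
        have gr12 := H.gap _ _ hr12 (hr2v.trans hv)
        have gr2 := H.gap _ _ hr2 (hz2.trans (hyv.trans hv))
        have hz1x : z1 ≤ x1 := not_lt.1 fun hh => hb1 ⟨z1, hh, hz12⟩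
        have hr2x : r2 ≤ x1 := not_lt.1 fun hh => hb1 ⟨r2, hh, hr2⟩
        rcases hz1x.lt_or_eq with hz1x | hz1x
        · have gzx := H.gap _ _ hz1x (hx1v.trans hv)
          have hdx : d x1 = 1 ∨ d x1 = 2 := by
            have := H.pos _ _ hz1x
            have := H.le2 x1 (hx1v.trans hv)
            omega
          rcases hdx with hdx | hdx
          · have := H.gap1 _ _ hz1x hdx
            linarith [ix1.1, iz1.1, iz2.1]
          have hr2x' : r2 < x1 := by
            refine lt_of_le_of_ne hr2x fun hh => ?_
            subst hh
            exact (hz2.trans (hy.trans h12)).ne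
              (H.up2 hdx (H.symm _ _ ar2) (H.symm _ _ ax1) hr2 (hx1.trans h12))
          have := H.gap _ _ hr2x' (hx1v.trans hv)
          linarith [ix1.1, iz1.1, ir1.1, ir2.1]
        · subst hz1x
          have hdx := hx1d az1
          have hr1x : r1 < z1 := lt_of_lt_of_le hr12 hr2x
          have h0 := H.pos _ _ hr1x
          have hdx1 : d z1 = 1 := by omega
          have hr2x' : r2 < z1 := by
            refine lt_of_le_of_ne hr2x fun hh => ?_
            subst hh
            rcases H.up1 r2 y w2 z2 hdx1 (H.symm _ _ az1) (H.symm _ _ ax1) h (hx1.trans h12)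
              (ne_of_lt (hy.trans h12)) (H.symm _ _ ar2) hr2 with hh | hh
            · exact hz2.ne hh
            · exact (hz2.trans (hy.trans h12)).ne hh
          have := H.gap1 _ _ hr2x' hdx1
          linarith [ix1.1, iz1.1, ir1.1, ir2.1]
    · have hz2x : z2 ≤ x1 := not_lt.1 fun hh => hb ⟨z2, hh, hz2⟩
      rcases hz2x.lt_or_eq with hz2x | hz2x
      · have := H.gap _ _ hz2x (hx1v.trans hv)
        linarith [ix1.1, iz1.1, iz2.1]
      · subst hz2x
        have hdx : d z2 = 1 := by
          have := H.pos _ _ hz12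
          have := H.twoup z2 y w2 (H.symm _ _ az2) (H.symm _ _ ax1) h (hx1.trans h12)
            (ne_of_lt (hy.trans h12))
          omega
        have gz1x := H.gap1 _ _ hz12 hdx
        obtain ⟨q, hq, aq, eq, hql⟩ := H.T1 z2 hdx
        have iq := IH q (hq.trans hx1v)
        have gq := H.gap1 _ _ hq hdx
        rcases lt_trichotomy q z1 with h' | h' | h'
        · have := H.gap _ _ h' (hz12.trans (hx1v.trans hv))
          linarith [iq.1, iz1.1]
        · exfalso
          subst h'
          have hxup : ∀ z, z2 < z → Adj z2 z → z = y ∨ z = w2 := fun z hz az =>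
            H.up1 z2 y w2 z hdx (H.symm _ _ az2) (H.symm _ _ ax1) h (hx1.trans h12)
              (ne_of_lt (hy.trans h12)) az hz
          have hyup : ∀ z, y < z → Adj y z → z = w1 :=
            fun z hz az => H.up2 hdy az (H.symm _ _ ay) hz hy
          have hyw2 := hy.trans h12
          refine H.cut {z2, y, w1, w2, v} q u (ne_of_lt (hq.trans (hx1v.trans hu))) ?_ ?_ ?_ ?_
          · simp only [mem_insert, mem_singleton, not_or]
            exact ⟨hq.ne, (hq.trans h).ne, (hq.trans hx1).ne, (hq.trans (hx1.trans h12)).ne,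
              (hq.trans hx1v).ne⟩
          · simp only [mem_insert, mem_singleton, not_or]
            exact ⟨(hx1v.trans hu).ne', (hyv.trans hu).ne', (h1v.trans hu).ne', (h2v.trans hu).ne',
              hu.ne'⟩
          · have : ({z2, y, w1, w2, v} : Finset V).card = 5 := by
              rw [card_insert_of_notMem, card_insert_of_notMem,
                card_eq_three.2 ⟨w1, w2, v, h12.ne, h1v.ne, h2v.ne, rfl⟩]
              · simp only [mem_insert, mem_singleton, not_or]
                exact ⟨hy.ne, hyw2.ne, hyv.ne⟩
              · simp only [mem_insert, mem_singleton, not_or]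
                exact ⟨h.ne, hx1.ne, (hx1.trans h12).ne, hx1v.ne⟩
            rw [this]; decide
          · intro a ha b hab
            simp only [mem_insert, mem_singleton] at ha ⊢
            have hne : b ≠ a := fun h => H.irr a (h ▸ hab)
            rcases ha with rfl | rfl | rfl | rfl | rfl <;> rcases lt_or_gt_of_ne hne with hl | hl
            · simp [hql b hl hab]
            · rcases hxup b hl hab with h | h <;> simp [h]
            · rcases hzl b hl hab with h | h <;> simp [h]
            · simp [hyup b hl hab]
            · simp [hyl b hl hab]
            · rcases hw1up b hl hab with h | h <;> simp [h]
            · rcases h2l b hl hab with h | h <;> simp [h]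
            · simp [hw2up b hl hab]
            · rcases hvl b hl hab with h | h <;> simp [h]
            · simp [hvup b hl hab]
        · have := H.gap _ _ h' (hq.trans (hx1v.trans hv))
          linarith [iq.1, iz1.1]

/-- `w1, w2, v` consecutive, `w1` and `w2` not adjacent. -/
theorem caseB1b (H : REctx Adj d e f vmax) {v w1 w2 x1 x2 : V} (hv : v < vmax)
    (IH : ∀ u, u < v → e u ≤ f u ∧ (d u ≤ 1 → e u ≤ f u - 1)) (hdv : d v = 2)
    (h12 : w1 < w2) (h2v : w2 < v) (a1 : Adj v w1) (a2 : Adj v w2)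
    (he : e v = 87 + (e w1 + e w2) / 2) (hvl : ∀ z, z < v → Adj v z → z = w1 ∨ z = w2)
    (hd : d w2 = 2) (hx12 : x1 < x2) (hx2 : x2 < w1) (ax1 : Adj w2 x1) (ax2 : Adj w2 x2)
    (he2 : e w2 = 87 + (e x1 + e x2) / 2) :
    e v ≤ f v := by
  have h1v := h12.trans h2v
  have hx2v := hx2.trans h1v
  have hx1v := hx12.trans hx2v
  have g12 := H.gap _ _ h12 (h2v.trans hv)
  have g2v := H.gap _ _ h2v hv
  have gx2 := H.gap _ _ hx2 (h1v.trans hv)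
  have gx12 := H.gap _ _ hx12 (hx2v.trans hv)
  have ix1 := IH x1 hx1v
  have ix2 := IH x2 hx2v
  have iw1 := IH w1 h1v
  have hdw1 : d w1 = 1 ∨ d w1 = 2 := by
    have := H.pos _ _ hx2
    have := H.le2 w1 (h1v.trans hv)
    omega
  rcases hdw1 with hdw1 | hdw1
  · have := H.gap1 _ _ hx2 hdw1
    linarith [ix1.1, ix2.1, iw1.1]
  by_cases hb : ∃ t, x2 < t ∧ t < w1
  · obtain ⟨t, t1, t2⟩ := hb
    have := H.gap _ _ t1 (t2.trans (h1v.trans hv))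
    have := H.gap _ _ t2 (h1v.trans hv)
    linarith [ix1.1, ix2.1, iw1.1]
  obtain ⟨y1, y2, hy12, hy2, ay1, ay2, ey, -⟩ := H.T2 w1 hdw1
  have hy2v := hy2.trans h1v
  have iy1 := IH y1 (hy12.trans hy2v)
  have iy2 := IH y2 hy2v
  have gy12 := H.gap _ _ hy12 (hy2v.trans hv)
  have gy2 := H.gap _ _ hy2 (h1v.trans hv)
  have hy2x : y2 ≤ x2 := not_lt.1 fun hh => hb ⟨y2, hh, hy2⟩
  rcases hy2x.lt_or_eq with hy2x | hy2x
  · have gy2x := H.gap _ _ hy2x (hx2v.trans hv)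
    by_cases hb1 : ∃ t, x1 < t ∧ t < x2
    · obtain ⟨t, t1, t2⟩ := hb1
      have := H.gap _ _ t1 (t2.trans (hx2v.trans hv))
      have := H.gap _ _ t2 (hx2v.trans hv)
      linarith [ix1.1, ix2.1, iy1.1, iy2.1]
    have hy2x1 : y2 ≤ x1 := not_lt.1 fun hh => hb1 ⟨y2, hh, hy2x⟩
    rcases hy2x1.lt_or_eq with hh | hh
    · have := H.gap _ _ hh (hx1v.trans hv)
      linarith [ix1.1, ix2.1, iy1.1, iy2.1]
    · subst hh
      have h0 := H.pos _ _ hy12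
      have := H.twoup y2 w1 w2 (H.symm _ _ ay2) (H.symm _ _ ax1) hy2 (hy2.trans h12) h12.ne
      have := H.gap1 _ _ hy12 (by omega)
      linarith [ix1.1, ix2.1, iy1.1, iy2.1]
  · subst hy2x
    have hdx : d y2 = 1 := by
      have := H.pos _ _ hy12
      have := H.twoup y2 w1 w2 (H.symm _ _ ay2) (H.symm _ _ ax2) hy2 (hy2.trans h12) h12.ne
      omega
    have gx12' := H.gap1 _ _ hx12 hdx
    have gy12' := H.gap1 _ _ hy12 hdx
    have ix2' := ix2.2 (by omega)
    by_cases hb1 : ∃ t, x1 < t ∧ t < y2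
    · obtain ⟨t, t1, t2⟩ := hb1
      have := H.gap _ _ t1 (t2.trans (hx2v.trans hv))
      have := H.gap1 _ _ t2 hdx
      linarith [ix1.1, ix2.1, iy1.1, iy2.1]
    have hy1x1 : y1 ≤ x1 := not_lt.1 fun hh => hb1 ⟨y1, hh, hy12⟩
    rcases hy1x1.lt_or_eq with hh | hh
    · have := H.gap _ _ hh (hx1v.trans hv)
      linarith [ix1.1, ix2.1, iy1.1, iy2.1]
    subst hh
    obtain ⟨p, hp, ap, ep, hpl⟩ := H.T1 y2 hdx
    have ip := IH p (hp.trans hx2v)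
    have hpx : p ≤ y1 := not_lt.1 fun hh => hb1 ⟨p, hh, hp⟩
    rcases hpx.lt_or_eq with hh | hh
    · have := H.gap _ _ hh (hx1v.trans hv)
      linarith [ix1.1, ip.1]
    · exfalso
      subst hh
      have hp1 := hp.trans hy2
      have hp2 := hp1.trans h12
      refine H.cut {p, y2, w1} w2 v h2v.ne ?_ ?_ ?_ ?_
      · simp only [mem_insert, mem_singleton, not_or]
        exact ⟨hp2.ne', (hy2.trans h12).ne', h12.ne'⟩
      · simp only [mem_insert, mem_singleton, not_or]
        exact ⟨hx1v.ne', hx2v.ne', h1v.ne'⟩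
      · rw [card_eq_three.2 ⟨p, y2, w1, hp.ne, hp1.ne, hy2.ne, rfl⟩]; decide
      · intro a ha b hab
        simp only [mem_insert, mem_singleton] at ha ⊢
        rcases ha with rfl | rfl | rfl
        · rcases H.deg3 a y2 w1 w2 b (H.symm _ _ ap) (H.symm _ _ ay1) (H.symm _ _ ax1)
            hy2.ne (hy2.trans h12).ne h12.ne hab with h | h | h <;> simp [h]
        · rcases H.deg3 a p w1 w2 b ap (H.symm _ _ ay2) (H.symm _ _ ax2)
            hp1.ne hp2.ne h12.ne hab with h | h | h <;> simp [h]
        · rcases H.deg3 a p y2 v b ay1 ay2 (H.symm _ _ a1)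
            hp.ne hx1v.ne hx2v.ne hab with h | h | h <;> simp [h]

/-- exactly one 2-vertex between `w1` and `w2`. -/
theorem caseB2 (H : REctx Adj d e f vmax) {v w1 t w2 : V} (hv : v < vmax)
    (IH : ∀ u, u < v → e u ≤ f u ∧ (d u ≤ 1 → e u ≤ f u - 1))
    (h1t : w1 < t) (ht2 : t < w2) (h2v : w2 < v) (a1 : Adj v w1) (a2 : Adj v w2)
    (he : e v = 87 + (e w1 + e w2) / 2) (hd : d w2 = 2) (hdt : d t = 2)
    (hc1 : ∀ s, s < t → s ≤ w1) (hc2 : ∀ s, s < w2 → s ≤ t) :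
    e v ≤ f v := by
  have htv := ht2.trans h2v
  have h1v := h1t.trans htv
  have g1t := H.gap _ _ h1t (htv.trans hv)
  have gt2 := H.gap _ _ ht2 (h2v.trans hv)
  have g2v := H.gap _ _ h2v hv
  have iw1 := IH w1 h1v
  obtain ⟨x1, x2, hx12, hx2, ax1, ax2, ex, -⟩ := H.T2 w2 hd
  have hx2v := hx2.trans h2v
  have hx1v := hx12.trans hx2v
  have gx12 := H.gap _ _ hx12 (hx2v.trans hv)
  have gx2 := H.gap _ _ hx2 (h2v.trans hv)
  have ix1 := IH x1 hx1v
  have ix2 := IH x2 hx2v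
  obtain ⟨r1, r2, hr12, hr2, ar1, ar2, er, -⟩ := H.T2 t hdt
  have hr2v := hr2.trans htv
  have ir1 := IH r1 (hr12.trans hr2v)
  have ir2 := IH r2 hr2v
  have gr12 := H.gap _ _ hr12 (hr2v.trans hv)
  have gr2 := H.gap _ _ hr2 (htv.trans hv)
  have hr2w := hc1 _ hr2
  have hw1pos := H.pos _ _ (lt_of_lt_of_le hr12 hr2w)
  have hw1d : d w1 = 1 ∨ d w1 = 2 := by
    have := H.le2 w1 (h1v.trans hv)
    omega
  rcases (hc2 _ hx2).lt_or_eq with hh | hh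
  · rcases (hc1 _ hh).lt_or_eq with hh' | hh'
    · have := H.gap _ _ hh' (h1v.trans hv)
      linarith [ix1.1, ix2.1, iw1.1]
    · subst hh'
      have := H.twoup x2 w2 v (H.symm _ _ ax2) (H.symm _ _ a1) hx2 h1v h2v.ne
      have := H.gap1 _ _ hx12 (by omega)
      linarith [ix1.1, ix2.1, iw1.1]
  · subst hh
    rcases (hc1 _ hx12).lt_or_eq with hh' | hh'
    · have gx1w := H.gap _ _ hh' (h1v.trans hv)
      rcases hw1d with hw1d | hw1d
      · have := H.gap1 _ _ hh' hw1d
        linarith [ix1.1, ix2.1, iw1.1]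
      have hr2w' : r2 < w1 := by
        refine lt_of_le_of_ne hr2w fun h => ?_
        subst h
        exact htv.ne (H.up2 hw1d (H.symm _ _ ar2) (H.symm _ _ a1) h1t h1v)
      have := H.gap _ _ hr2w' (h1v.trans hv)
      linarith [ix1.1, ir1.1, ir2.1, iw1.1]
    · subst hh'
      have hdx : d x1 = 1 := by
        have := H.twoup x1 w2 v (H.symm _ _ ax1) (H.symm _ _ a1) (h1t.trans ht2) h1v h2v.ne
        omega
      have hr2w' : r2 < x1 := by
        refine lt_of_le_of_ne hr2w fun h => ?_
        subst h
        rcases H.up1 r2 w2 v x2 hdx (H.symm _ _ ax1) (H.symm _ _ a1) (h1t.trans ht2) h1v h2v.ne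
          (H.symm _ _ ar2) hr2 with hh | hh
        · exact ht2.ne hh
        · exact htv.ne hh
      have := H.gap1 _ _ hr2w' hdx
      linarith [ix1.1, ir1.1, ir2.1, iw1.1]

theorem step (H : REctx Adj d e f vmax) {v : V} (hv : v < vmax)
    (IH : ∀ u, u < v → e u ≤ f u ∧ (d u ≤ 1 → e u ≤ f u - 1)) (hdv : d v = 2) :
    e v ≤ f v := by
  obtain ⟨w1, w2, h12, h2v, a1, a2, he, hvl⟩ := H.T2 v hdv
  have h1v := h12.trans h2v
  have hd : d w2 = 1 ∨ d w2 = 2 := by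
    have := H.pos _ _ h12
    have := H.le2 w2 (h2v.trans hv)
    omega
  rcases hd with hd | hd
  · exact H.caseA hv IH h12 h2v a1 a2 he hd
  have i1 := IH w1 h1v
  have i2 := IH w2 h2v
  have g12 := H.gap _ _ h12 (h2v.trans hv)
  have g2v := H.gap _ _ h2v hv
  by_cases hb : ∃ t, w2 < t ∧ t < v
  · obtain ⟨t, t1, t2⟩ := hb
    have := H.gap _ _ t1 (t2.trans hv)
    have := H.gap _ _ t2 hv
    linarith [i1.1, i2.1]
  by_cases hb' : ∃ t, w1 < t ∧ t < w2
  · obtain ⟨t, t1, t2⟩ := hb'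
    have htv := t2.trans h2v
    have gt1 := H.gap _ _ t1 (htv.trans hv)
    have gt2 := H.gap _ _ t2 (h2v.trans hv)
    by_cases hs1 : ∃ s, w1 < s ∧ s < t
    · obtain ⟨s, s1, s2⟩ := hs1
      have := H.gap _ _ s1 (s2.trans (htv.trans hv))
      have := H.gap _ _ s2 (htv.trans hv)
      linarith [i1.1, i2.1]
    by_cases hs2 : ∃ s, t < s ∧ s < w2
    · obtain ⟨s, s1, s2⟩ := hs2
      have := H.gap _ _ s1 (s2.trans (h2v.trans hv))
      have := H.gap _ _ s2 (h2v.trans hv)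
      linarith [i1.1, i2.1]
    have hdt : d t = 1 ∨ d t = 2 := by
      have := H.pos _ _ t1
      have := H.le2 t (htv.trans hv)
      omega
    rcases hdt with hdt | hdt
    · have := H.gap1 _ _ t1 hdt
      linarith [i1.1, i2.1]
    exact H.caseB2 hv IH t1 t2 h2v a1 a2 he hd hdt
      (fun s hs => not_lt.1 fun h => hs1 ⟨s, h, hs⟩) (fun s hs => not_lt.1 fun h => hs2 ⟨s, h, hs⟩)
  · obtain ⟨x1, x2, hx12, hx2, ax1, ax2, ex, hxl⟩ := H.T2 w2 hd
    have hx2w : x2 ≤ w1 := not_lt.1 fun h => hb' ⟨x2, h, hx2⟩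
    rcases hx2w.lt_or_eq with h | h
    · exact H.caseB1b hv IH hdv h12 h2v a1 a2 he hvl hd hx12 h ax1 ax2 ex
    · subst h
      exact H.caseB1a hv IH hdv h12 h2v a1 a2 he hvl hd hx12 ax1 ax2 ex hxl

end REctx

namespace REctx

variable {V : Type} [LinearOrder V] {Adj : V → V → Prop} {d : V → ℕ} {e f : V → ℝ} {vmax : V}

/-- The bound at the maximal vertex. -/
theorem top (H : REctx Adj d e f vmax) {a b c : V} (hab : a < b) (hbc : b < c) (hc : c < vmax)
    (ab : Adj b vmax) (hP : ∀ u, u < vmax → e u ≤ f u) (F : ℝ)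
    (hF : ∀ u, u < vmax → f u ≤ F) : 87 + (e a + e b + e c) / 3 ≤ F + 44 := by
  have hb := hbc.trans hc
  have ha := hab.trans hb
  have pa := hP a ha
  have pb := hP b hb
  have pc := hP c hc
  have gab := H.gap _ _ hab hb
  have gbc := H.gap _ _ hbc hc
  have Fc := hF c hc
  have hdb : d b = 1 ∨ d b = 2 := by
    have := H.pos _ _ hab
    have := H.le2 b hb
    omega
  have hdc : d c = 1 ∨ d c = 2 := by
    have := H.pos _ _ hbc
    have := H.le2 c hc
    omega
  rcases hdb with hdb | hdb
  · have := H.gap1 _ _ hab hdb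
    linarith
  rcases hdc with hdc | hdc
  · have := H.gap1 _ _ hbc hdc
    linarith
  obtain ⟨r1, r2, hr12, hr2, ar1, ar2, er, -⟩ := H.T2 c hdc
  have p1 := hP r1 (hr12.trans (hr2.trans hc))
  have p2 := hP r2 (hr2.trans hc)
  have g12 := H.gap _ _ hr12 (hr2.trans hc)
  rcases lt_trichotomy r2 b with h | h | h
  · have := H.gap _ _ h hb
    linarith
  · subst h
    exact absurd (H.up2 hdb (H.symm _ _ ar2) ab hr2 hb) hc.ne
  · have := H.gap _ _ h (hr2.trans hc)
    have := H.gap _ _ hr2 hc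
    linarith

theorem all [WellFoundedLT V] (H : REctx Adj d e f vmax)
    (h0 : ∀ v, d v = 0 → e v ≤ f v - 1) (v : V) :
    v < vmax → e v ≤ f v ∧ (d v ≤ 1 → e v ≤ f v - 1) := by
  induction v using WellFoundedLT.induction with
  | ind v ih =>
    intro hv
    have IH : ∀ u, u < v → e u ≤ f u ∧ (d u ≤ 1 → e u ≤ f u - 1) :=
      fun u hu => ih u hu (hu.trans hv)
    have := H.le2 v hv
    obtain hd | hd | hd : d v = 0 ∨ d v = 1 ∨ d v = 2 := by omega
    · have := h0 v hd
      exact ⟨by linarith, fun _ => this⟩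
    · obtain ⟨x, hx, -, ex, -⟩ := H.T1 v hd
      have := H.gap1 _ _ hx hd
      have := (IH x hx).1
      exact ⟨by linarith, fun _ => by linarith⟩
    · exact ⟨H.step hv IH hd, fun h => by omega⟩

end REctx

theorem exists_sorted_three {V : Type} [LinearOrder V] {s : Finset V} (h : s.card = 3) :
    ∃ a b c, a < b ∧ b < c ∧ s = {a, b, c} := by
  obtain ⟨x, y, z, hxy, hxz, hyz, rfl⟩ := card_eq_three.1 h
  rcases lt_or_gt_of_ne hxy with h1 | h1 <;> rcases lt_or_gt_of_ne hxz with h2 | h2 <;>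
    rcases lt_or_gt_of_ne hyz with h3 | h3
  · exact ⟨x, y, z, h1, h3, rfl⟩
  · exact ⟨x, z, y, h2, h3, by ext; simp; tauto⟩
  · exact absurd (h1.trans h3) (not_lt.2 h2.le)
  · exact ⟨z, x, y, h2, h1, by ext; simp; tauto⟩
  · exact ⟨y, x, z, h1, h2, by ext; simp; tauto⟩
  · exact absurd (h2.trans h3) (not_lt.2 h1.le)
  · exact ⟨y, z, x, h3, h2, by ext; simp; tauto⟩
  · exact ⟨z, y, x, h3, h1, by ext; simp; tauto⟩

theorem no_small_cut {V : Type} [Fintype V] [DecidableEq V] (G : SimpleGraph V) (n : ℕ)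
    (hcard : Fintype.card V = 2 * n - 4)
    (hconn : ∀ S : Finset V, S.card ≤ 2 → (G.induce ((↑S : Set V)ᶜ)).Connected)
    (A : Finset V) (p q : V) (hpq : p ≠ q) (hp : p ∉ A) (hq : q ∉ A) (hodd : Odd A.card)
    (hA : ∀ a ∈ A, ∀ b, G.Adj a b → b ∈ A ∨ b = p ∨ b = q) : False := by
  have hout : ∃ z, z ∉ insert p (insert q A) := by
    by_contra hcon
    push Not at hcon
    have h1 : insert p (insert q A) = univ := eq_univ_iff_forall.2 hcon
    have h2 : (insert p (insert q A)).card = A.card + 1 + 1 := by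
      rw [card_insert_of_notMem, card_insert_of_notMem hq]
      simp [hpq, hp]
    rw [h1, card_univ, hcard] at h2
    obtain ⟨k, hk⟩ := hodd
    omega
  obtain ⟨z, hz⟩ := hout
  simp only [mem_insert, not_or] at hz
  obtain ⟨a, ha⟩ : A.Nonempty := by
    rw [← card_pos]; exact hodd.pos
  have hc := hconn {p, q} card_le_two
  have key : ∀ x y : ((↑({p, q} : Finset V) : Set V)ᶜ : Set V),
      (G.induce ((↑({p, q} : Finset V) : Set V)ᶜ)).Walk x y → x.1 ∈ A → y.1 ∈ A := by
    intro x y w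
    induction w with
    | nil => exact id
    | @cons u v w h _ ih =>
      intro hu
      apply ih
      rcases hA _ hu v.1 h with h | h | h
      · exact h
      · exact absurd v.2 (by simp [h])
      · exact absurd v.2 (by simp [h])
  have ha' : a ∈ ((↑({p, q} : Finset V) : Set V)ᶜ : Set V) := by
    have h1 : a ≠ p := fun h => hp (h ▸ ha)
    have h2 : a ≠ q := fun h => hq (h ▸ ha)
    simp [h1, h2]
  have hz' : z ∈ ((↑({p, q} : Finset V) : Set V)ᶜ : Set V) := by
    simp [hz.1, hz.2.1]
  obtain ⟨w⟩ := hc.preconnected ⟨a, ha'⟩ ⟨z, hz'⟩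
  exact hz.2.2 (key _ _ w ha)

theorem random_edge_thm32
    (n : ℕ) (hn : 4 ≤ n)
    (V : Type) [Fintype V] [LinearOrder V]
    (hcard : Fintype.card V = 2 * n - 4)
    (vmin vmax : V)
    (hvmin : ∀ v : V, vmin ≤ v) (hvmax : ∀ v : V, v ≤ vmax)
    (G : SimpleGraph V) [DecidableRel G.Adj]
    (hreg : ∀ v : V, (G.neighborFinset v).card = 3)
    (low : V → Finset V)
    (hlow : ∀ v : V, low v = (G.neighborFinset v).filter (fun w => w < v))
    (d : V → ℕ) (hd : ∀ v : V, d v = (low v).card)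
    (hlower : ∀ v : V, v ≠ vmin → 1 ≤ d v)
    (hupper : ∀ v : V, v ≠ vmax → ∃ u : V, G.Adj v u ∧ v < u)
    (E : V → ℝ) (hE0 : E vmin = 0)
    (hE : ∀ v : V, v ≠ vmin → E v = 1 + (1 / (d v : ℝ)) * ∑ w ∈ low v, E w)
    (N1 N2 N : V → ℕ)
    (hN1 : ∀ v : V, N1 v = (Finset.univ.filter (fun w => w ≤ v ∧ d w = 1)).card)
    (hN2 : ∀ v : V, N2 v = (Finset.univ.filter (fun w => w ≤ v ∧ d w = 2)).card)
    (hN : ∀ v : V, N v = N1 v + N2 v)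
    (hconn : ∀ S : Finset V, S.card ≤ 2 → (G.induce ((↑S : Set V)ᶜ)).Connected) :
    ∀ v : V, E v ≤ (130 / 87) * (n : ℝ) - 115 / 29 := by
  have hlm : ∀ v w, w ∈ low v ↔ G.Adj v w ∧ w < v := by
    intro v w; rw [hlow]; simp
  have hd0 : d vmin = 0 := by
    rw [hd, card_eq_zero, eq_empty_iff_forall_notMem]
    intro w hw
    exact absurd ((hlm _ _).1 hw).2 (not_lt.2 (hvmin w))
  have hlowsub : ∀ v (t : Finset V), (∀ a ∈ t, G.Adj v a ∧ v < a) → d v + t.card ≤ 3 := by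
    intro v t ht
    rw [hd, ← hreg v, ← card_union_of_disjoint]
    · apply card_le_card
      intro w hw
      rw [mem_union] at hw
      rw [SimpleGraph.mem_neighborFinset]
      rcases hw with hw | hw
      · exact ((hlm _ _).1 hw).1
      · exact (ht w hw).1
    · rw [disjoint_left]
      intro w hw hw'
      exact lt_asymm ((hlm _ _).1 hw).2 (ht w hw').2
  have mono1 : ∀ u v, u ≤ v → N1 u ≤ N1 v := by
    intro u v h
    rw [hN1, hN1]
    apply card_le_card
    intro w
    simp only [mem_filter, mem_univ, true_and]
    exact fun hw => ⟨hw.1.trans h, hw.2⟩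
  have mono2 : ∀ u v, u ≤ v → N2 u ≤ N2 v := by
    intro u v h
    rw [hN2, hN2]
    apply card_le_card
    intro w
    simp only [mem_filter, mem_univ, true_and]
    exact fun hw => ⟨hw.1.trans h, hw.2⟩
  have smono1 : ∀ u v, u < v → d v = 1 → N1 u + 1 ≤ N1 v := by
    intro u v h hv
    rw [hN1, hN1, Nat.succ_le_iff]
    apply card_lt_card
    rw [ssubset_iff_of_subset]
    · exact ⟨v, by simp [hv], by simp [h]⟩
    intro w
    simp only [mem_filter, mem_univ, true_and]
    exact fun hw => ⟨hw.1.trans h.le, hw.2⟩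
  have smono2 : ∀ u v, u < v → d v = 2 → N2 u + 1 ≤ N2 v := by
    intro u v h hv
    rw [hN2, hN2, Nat.succ_le_iff]
    apply card_lt_card
    rw [ssubset_iff_of_subset]
    · exact ⟨v, by simp [hv], by simp [h]⟩
    intro w
    simp only [mem_filter, mem_univ, true_and]
    exact fun hw => ⟨hw.1.trans h.le, hw.2⟩
  have hpos : ∀ u v, u < v → 1 ≤ d v := fun u v h =>
    hlower v (lt_of_le_of_lt (hvmin u) h).ne'
  have hle2 : ∀ v, v < vmax → d v ≤ 2 := by
    intro v hv
    obtain ⟨u, au, hu⟩ := hupper v hv.ne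
    have := hlowsub v {u} (by simp [au, hu])
    rw [card_singleton] at this
    omega
  have hgap1 : ∀ u v, u < v → d v = 1 →
      (88 * (N1 u : ℝ) + 42 * N2 u + 1) + 88 ≤ 88 * (N1 v : ℝ) + 42 * N2 v + 1 := by
    intro u v h hv
    have h1 : ((N1 u + 1 : ℕ) : ℝ) ≤ N1 v := Nat.cast_le.2 (smono1 u v h hv)
    have h2 : (N2 u : ℝ) ≤ N2 v := Nat.cast_le.2 (mono2 u v h.le)
    push_cast at h1
    linarith
  have hgap2 : ∀ u v, u < v → d v = 2 →
      (88 * (N1 u : ℝ) + 42 * N2 u + 1) + 42 ≤ 88 * (N1 v : ℝ) + 42 * N2 v + 1 := by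
    intro u v h hv
    have h1 : ((N2 u + 1 : ℕ) : ℝ) ≤ N2 v := Nat.cast_le.2 (smono2 u v h hv)
    have h2 : (N1 u : ℝ) ≤ N1 v := Nat.cast_le.2 (mono1 u v h.le)
    push_cast at h1
    linarith
  have H : REctx G.Adj d (fun v => 87 * E v) (fun v => 88 * (N1 v : ℝ) + 42 * N2 v + 1) vmax :=
    { symm := fun a b h => h.symm
      irr := fun a h => G.loopless.irrefl a h
      pos := hpos
      le2 := hle2
      T1 := by
        intro v hv
        have hne : v ≠ vmin := by rintro rfl; omega
        have h1 := hd v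
        rw [hv] at h1
        obtain ⟨x, hx⟩ := card_eq_one.1 h1.symm
        have hxm := (hlm v x).1 (by simp [hx])
        refine ⟨x, hxm.2, hxm.1, ?_, ?_⟩
        · have := hE v hne
          rw [hx, hv] at this
          simp at this
          simp only [this]
          ring
        · intro z hz az
          have := (hlm v z).2 ⟨az, hz⟩
          simpa [hx] using this
      T2 := by
        intro v hv
        have hne : v ≠ vmin := by rintro rfl; omega
        have h1 := hd v
        rw [hv] at h1
        obtain ⟨x, y, hxy, hx, hs⟩ : ∃ x y, x < y ∧ low v = {x, y} ∧
            ∑ w ∈ low v, E w = E x + E y := by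
          obtain ⟨x, y, hxy, hx⟩ := card_eq_two.1 h1.symm
          rcases lt_or_gt_of_ne hxy with h | h
          · exact ⟨x, y, h, hx, by rw [hx, sum_pair hxy]⟩
          · exact ⟨y, x, h, by rw [hx, pair_comm], by rw [hx, sum_pair hxy, add_comm]⟩
        have hxm := (hlm v x).1 (by simp [hx])
        have hym := (hlm v y).1 (by simp [hx])
        refine ⟨x, y, hxy, hym.2, hxm.1, hym.1, ?_, ?_⟩
        · have := hE v hne
          rw [hs, hv] at this
          simp only [this]
          push_cast
          ring
        · intro z hz az
          have := (hlm v z).2 ⟨az, hz⟩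
          simpa [hx] using this
      gap := by
        intro u v h hv
        have h1 := hpos u v h
        have h2 := hle2 v hv
        obtain h3 | h3 : d v = 1 ∨ d v = 2 := by omega
        · have := hgap1 u v h h3
          linarith
        · exact hgap2 u v h h3
      gap1 := hgap1
      twoup := by
        intro x a b ha hb hxa hxb hab
        have := hlowsub x {a, b} (by simp [*])
        rw [card_pair hab] at this
        omega
      up1 := by
        intro x a b z hx ha hb hxa hxb hab hz hxz
        by_contra hcon
        push Not at hcon
        have := hlowsub x {z, a, b} (by simp [*])
        rw [card_eq_three.2 ⟨z, a, b, hcon.1, hcon.2, hab, rfl⟩] at this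
        omega
      deg3 := by
        intro x a b c z ha hb hc hab hac hbc hz
        have h1 : ({a, b, c} : Finset V) = G.neighborFinset x := by
          apply eq_of_subset_of_card_le
          · intro w; simp only [mem_insert, mem_singleton, SimpleGraph.mem_neighborFinset]
            rintro (rfl | rfl | rfl) <;> assumption
          · rw [hreg, card_eq_three.2 ⟨a, b, c, hab, hac, hbc, rfl⟩]
        have h2 : z ∈ ({a, b, c} : Finset V) := by rw [h1]; simpa using hz
        simpa using h2
      hasup := fun v hv => hupper v hv.ne
      cut := no_small_cut G n hcard hconn }
  -- counting
  have hlowmax : low vmax = G.neighborFinset vmax := by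
    rw [hlow, filter_eq_self]
    intro w hw
    rw [SimpleGraph.mem_neighborFinset] at hw
    exact lt_of_le_of_ne (hvmax w) hw.ne'
  have hdmax : d vmax = 3 := by rw [hd, hlowmax, hreg]
  have hne : vmin ≠ vmax := by intro h; rw [h] at hd0; omega
  have hsum : 2 * ∑ v, d v = 3 * Fintype.card V := by
    have h1 : ∑ v, d v = ∑ v, ((G.neighborFinset v).filter (fun w => v < w)).card := by
      simp only [hd, hlow, card_filter, SimpleGraph.neighborFinset_eq_filter, sum_filter]
      rw [sum_comm]
      simp only [G.adj_comm]
    have h2 : ∀ v, d v + ((G.neighborFinset v).filter (fun w => v < w)).card = 3 := by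
      intro v
      rw [hd, hlow, ← hreg v, ← card_filter_add_card_filter_not (s := G.neighborFinset v)
        (fun w => w < v)]
      congr 2
      apply filter_congr
      intro w hw
      rw [SimpleGraph.mem_neighborFinset] at hw
      rw [not_lt]
      exact ⟨le_of_lt, fun h => lt_of_le_of_ne h hw.ne⟩
    have h3 : ∑ v, (d v + ((G.neighborFinset v).filter (fun w => v < w)).card)
        = 3 * Fintype.card V := by
      simp only [h2, sum_const, card_univ, smul_eq_mul, mul_comm]
    rw [sum_add_distrib, ← h1] at h3
    omega
  have hvals : ∀ v, v ≠ vmin → v ≠ vmax → d v = 1 ∨ d v = 2 := by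
    intro v h1 h2
    have := hlower v h1
    have := hle2 v (lt_of_le_of_ne (hvmax v) h2)
    omega
  have hM1 : N1 vmax = ∑ v, if d v = 1 then 1 else 0 := by
    rw [hN1, card_filter]; simp [hvmax]
  have hM2 : N2 vmax = ∑ v, if d v = 2 then 1 else 0 := by
    rw [hN2, card_filter]; simp [hvmax]
  have hS1 : ∑ v, d v = N1 vmax + 2 * N2 vmax + 3 := by
    have : ∀ v, d v = (if d v = 1 then 1 else 0) + 2 * (if d v = 2 then 1 else 0)
        + if v = vmax then 3 else 0 := by
      intro v
      by_cases h1 : v = vmin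
      · subst h1; simp [hd0, hne]
      by_cases h2 : v = vmax
      · subst h2; simp [hdmax]
      rcases hvals v h1 h2 with h | h <;> simp [h, h2]
    rw [hM1, hM2, mul_sum, ← sum_add_distrib]
    conv_lhs => rw [sum_congr rfl (fun v _ => this v)]
    rw [sum_add_distrib]
    simp
  have hS2 : Fintype.card V = N1 vmax + N2 vmax + 2 := by
    have : ∀ v, 1 = (if d v = 1 then 1 else 0) + (if d v = 2 then 1 else 0)
        + ((if v = vmin then 1 else 0) + if v = vmax then 1 else 0) := by
      intro v
      by_cases h1 : v = vmin
      · subst h1; simp [hd0, hne]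
      by_cases h2 : v = vmax
      · subst h2; simp [hdmax, hne.symm]
      rcases hvals v h1 h2 with h | h <;> simp [h, h1, h2]
    rw [hM1, hM2, ← sum_add_distrib, ← card_univ, card_eq_sum_ones]
    conv_lhs => rw [sum_congr rfl (fun v _ => this v)]
    rw [sum_add_distrib (f := fun v => (if d v = 1 then 1 else 0) + (if d v = 2 then 1 else 0)),
      sum_add_distrib (f := fun v => if v = vmin then 1 else 0)]
    simp
  have hT1 : N1 vmax + 3 = n := by omega
  have hT2 : N2 vmax + 3 = n := by omega
  have hT1' : (N1 vmax : ℝ) + 3 = n := by exact_mod_cast hT1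
  have hT2' : (N2 vmax : ℝ) + 3 = n := by exact_mod_cast hT2
  have hall := H.all (by
    intro v hv
    have : v = vmin := by
      by_contra h
      have := hlower v h
      omega
    subst this
    simp only [hE0]
    have h1 : (0 : ℝ) ≤ N1 v := Nat.cast_nonneg _
    have h2 : (0 : ℝ) ≤ N2 v := Nat.cast_nonneg _
    linarith)
  have hF : ∀ u, u < vmax → 88 * (N1 u : ℝ) + 42 * N2 u + 1 ≤
      88 * (N1 vmax : ℝ) + 42 * N2 vmax + 1 := by
    intro u hu
    have h1 : (N1 u : ℝ) ≤ N1 vmax := Nat.cast_le.2 (mono1 _ _ hu.le)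
    have h2 : (N2 u : ℝ) ≤ N2 vmax := Nat.cast_le.2 (mono2 _ _ hu.le)
    linarith
  intro v
  rcases (hvmax v).lt_or_eq with hv | hv
  · have h1 := (hall v hv).1
    have h2 := hF v hv
    linarith
  · subst hv
    obtain ⟨a, b, c, hab, hbc, hs⟩ := exists_sorted_three (hreg v)
    have hcm := (hlm v c).1 (by rw [hlowmax, hs]; simp)
    have hbm := (hlm v b).1 (by rw [hlowmax, hs]; simp)
    have h1 := H.top hab hbc hcm.2 hbm.1.symm (fun u hu => (hall u hu).1) _ hF
    have h2 := hE v hne.symm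
    rw [hlowmax, hs, hdmax, sum_insert (by simp [hab.ne, (hab.trans hbc).ne]), sum_pair hbc.ne] at h2
    push_cast at h2
    linarith
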